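/- arXiv:math/0609260 — 2 statements merged into one kernel-verified Lean document; each statement's English description precedes it below -/
import Mathlib

section
/- Let p be a prime, let G = SL(2,ℚ_p), let K = SL(2,ℤ_p), let I be the Iwahori subgroup of K consisting of those elements whose lower-left entry lies in pℤ_p, and for an integer λ let a_λ ∈ G be the diagonal matrix diag(p^λ, p^(−λ)). Then for every g ∈ G there exist k ∈ K, i ∈ I and an integer λ ∈ ℤ with g = k·a_λ·i, and the integer λ ∈ ℤ with this property is unique. (This is the decomposition G = G_x·Ã·G_y used in Section 4 of the paper, where λ ranges over all integers, in contrast with the Cartan decomposition.) -/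
/-- The diagonal matrix `diag(p^λ, p^(−λ))` as an element of `SL(2, ℚ_p)`. -/
noncomputable def aSL (p : ℕ) [Fact p.Prime] (lam : ℤ) :
    Matrix.SpecialLinearGroup (Fin 2) ℚ_[p] :=
  ⟨!![(p : ℚ_[p]) ^ lam, 0; 0, (p : ℚ_[p]) ^ (-lam)], by
    have hp : (p : ℚ_[p]) ≠ 0 := by
      exact_mod_cast (Fact.out : p.Prime).ne_zero
    simp [Matrix.det_fin_two_of, zpow_neg]
    exact mul_inv_cancel₀ (zpow_ne_zero _ hp)⟩

/-- The maximal compact subgroup `K = SL(2, ℤ_p)`, viewed as the set of elements of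
`SL(2, ℚ_p)` all of whose entries lie in `ℤ_p` (i.e. have norm at most `1`). -/
def Kset (p : ℕ) [Fact p.Prime] : Set (Matrix.SpecialLinearGroup (Fin 2) ℚ_[p]) :=
  {g | ∀ i j : Fin 2, ‖(g : Matrix (Fin 2) (Fin 2) ℚ_[p]) i j‖ ≤ 1}

/-- The Iwahori subgroup `I` of `K`, consisting of those elements of `K` whose lower-left
entry lies in `p·ℤ_p`. -/
def Iset (p : ℕ) [Fact p.Prime] : Set (Matrix.SpecialLinearGroup (Fin 2) ℚ_[p]) :=
  {g | g ∈ Kset p ∧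
    ∃ y : ℚ_[p], ‖y‖ ≤ 1 ∧ (g : Matrix (Fin 2) (Fin 2) ℚ_[p]) 1 0 = (p : ℚ_[p]) * y}


lemma Kset_mul {p : ℕ} [Fact p.Prime] {g h : Matrix.SpecialLinearGroup (Fin 2) ℚ_[p]}
    (hg : g ∈ Kset p) (hh : h ∈ Kset p) : g * h ∈ Kset p := by
  intro i j
  rw [Matrix.SpecialLinearGroup.coe_mul, Matrix.mul_apply, Fin.sum_univ_two]
  refine (Padic.nonarchimedean _ _).trans (max_le ?_ ?_) <;> rw [norm_mul] <;>
    exact mul_le_one₀ (hg _ _) (norm_nonneg _) (hh _ _)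

lemma Kset_inv {p : ℕ} [Fact p.Prime] {g : Matrix.SpecialLinearGroup (Fin 2) ℚ_[p]}
    (hg : g ∈ Kset p) : g⁻¹ ∈ Kset p := by
  intro i j
  have h := hg
  rw [Matrix.SpecialLinearGroup.coe_inv, Matrix.adjugate_fin_two]
  fin_cases i <;> fin_cases j <;> simp <;> exact hg _ _

lemma Iset_mul {p : ℕ} [Fact p.Prime] {g h : Matrix.SpecialLinearGroup (Fin 2) ℚ_[p]}
    (hg : g ∈ Iset p) (hh : h ∈ Iset p) : g * h ∈ Iset p := by
  obtain ⟨gK, y, hy, hy'⟩ := hg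
  obtain ⟨hK, z, hz, hz'⟩ := hh
  refine ⟨Kset_mul gK hK, y * h.1 0 0 + g.1 1 1 * z, ?_, ?_⟩
  · refine (Padic.nonarchimedean _ _).trans (max_le ?_ ?_) <;> rw [norm_mul]
    · exact mul_le_one₀ hy (norm_nonneg _) (hK _ _)
    · exact mul_le_one₀ (gK _ _) (norm_nonneg _) hz
  · rw [Matrix.SpecialLinearGroup.coe_mul, Matrix.mul_apply, Fin.sum_univ_two, hy', hz']
    ring

lemma Iset_inv {p : ℕ} [Fact p.Prime] {g : Matrix.SpecialLinearGroup (Fin 2) ℚ_[p]}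
    (hg : g ∈ Iset p) : g⁻¹ ∈ Iset p := by
  obtain ⟨gK, y, hy, hy'⟩ := hg
  refine ⟨Kset_inv gK, -y, by simpa using hy, ?_⟩
  rw [Matrix.SpecialLinearGroup.coe_inv, Matrix.adjugate_fin_two]
  simp [hy']

lemma Iset_diag {p : ℕ} [Fact p.Prime] {g : Matrix.SpecialLinearGroup (Fin 2) ℚ_[p]}
    (hg : g ∈ Iset p) : ‖g.1 0 0‖ = 1 ∧ ‖g.1 1 1‖ = 1 := by
  obtain ⟨gK, y, hy, hy'⟩ := hg
  have hd := g.2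
  rw [Matrix.det_fin_two, hy'] at hd
  have h1 : ‖g.1 0 1 * (p * y)‖ < 1 := by
    rw [norm_mul, norm_mul]
    have a := gK 0 1
    have b := Padic.norm_p_lt_one (p := p)
    have c : ‖(p : ℚ_[p])‖ * ‖y‖ < 1 := mul_lt_one_of_nonneg_of_lt_one_left (norm_nonneg _) b hy
    exact mul_lt_one_of_nonneg_of_lt_one_right a (by positivity) c
  have h00 := gK 0 0
  have h11 := gK 1 1
  have h2 : 1 ≤ ‖g.1 0 0‖ * ‖g.1 1 1‖ := by
    by_contra! h
    rw [← norm_mul] at h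
    have := (Padic.nonarchimedean (g.1 0 0 * g.1 1 1) (-(g.1 0 1 * (p * y))))
    rw [← sub_eq_add_neg, hd, norm_one, norm_neg] at this
    exact absurd this (not_le.2 (max_lt h h1))
  have n0 := norm_nonneg (g.1 0 0)
  have n1 := norm_nonneg (g.1 1 1)
  constructor <;> apply le_antisymm <;> first | assumption | nlinarith

/-- The set of decomposable elements. -/
def Sset (p : ℕ) [Fact p.Prime] (g : Matrix.SpecialLinearGroup (Fin 2) ℚ_[p]) : Prop :=
  ∃ lam : ℤ, ∃ k ∈ Kset p, ∃ i ∈ Iset p, g = k * aSL p lam * i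

lemma Sset_left {p : ℕ} [Fact p.Prime] {k g : Matrix.SpecialLinearGroup (Fin 2) ℚ_[p]}
    (hk : k ∈ Kset p) (h : Sset p (k * g)) : Sset p g := by
  obtain ⟨l, k', hk', i, hi, e⟩ := h
  refine ⟨l, k⁻¹ * k', Kset_mul (Kset_inv hk) hk', i, hi, ?_⟩
  rw [mul_assoc, mul_assoc, ← mul_assoc k', ← e]; group

lemma Sset_right {p : ℕ} [Fact p.Prime] {i g : Matrix.SpecialLinearGroup (Fin 2) ℚ_[p]}
    (hi : i ∈ Iset p) (h : Sset p (g * i)) : Sset p g := by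
  obtain ⟨l, k', hk', i', hi', e⟩ := h
  refine ⟨l, k', hk', i' * i⁻¹, Iset_mul hi' (Iset_inv hi), ?_⟩
  rw [← mul_assoc, ← e]; group

/-- Upper unipotent. -/
noncomputable def uSL (p : ℕ) [Fact p.Prime] (x : ℚ_[p]) : Matrix.SpecialLinearGroup (Fin 2) ℚ_[p] :=
  ⟨!![1, x; 0, 1], by simp⟩

/-- Lower unipotent. -/
noncomputable def vSL (p : ℕ) [Fact p.Prime] (x : ℚ_[p]) : Matrix.SpecialLinearGroup (Fin 2) ℚ_[p] :=
  ⟨!![1, 0; x, 1], by simp⟩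

/-- Weyl element. -/
noncomputable def wSL (p : ℕ) [Fact p.Prime] : Matrix.SpecialLinearGroup (Fin 2) ℚ_[p] :=
  ⟨!![0, 1; -1, 0], by simp⟩

lemma uSL_K {p : ℕ} [Fact p.Prime] {x : ℚ_[p]} (hx : ‖x‖ ≤ 1) : uSL p x ∈ Kset p := by
  intro i j
  fin_cases i <;> fin_cases j <;> simp [uSL, hx]

lemma vSL_K {p : ℕ} [Fact p.Prime] {x : ℚ_[p]} (hx : ‖x‖ ≤ 1) : vSL p x ∈ Kset p := by
  intro i j
  fin_cases i <;> fin_cases j <;> simp [vSL, hx]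

lemma wSL_K {p : ℕ} [Fact p.Prime] : wSL p ∈ Kset p := by
  intro i j
  fin_cases i <;> fin_cases j <;> simp [wSL]

lemma uSL_I {p : ℕ} [Fact p.Prime] {x : ℚ_[p]} (hx : ‖x‖ ≤ 1) : uSL p x ∈ Iset p :=
  ⟨uSL_K hx, 0, by simp, by simp [uSL]⟩

lemma vSL_I {p : ℕ} [Fact p.Prime] {x : ℚ_[p]} (hx : ‖x‖ < 1) : vSL p x ∈ Iset p := by
  refine ⟨vSL_K hx.le, ?_⟩
  have hp : (p : ℚ_[p]) ≠ 0 := by exact_mod_cast (Fact.out : p.Prime).ne_zero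
  obtain ⟨y, hy⟩ := (PadicInt.norm_lt_one_iff_dvd (⟨x, hx.le⟩ : ℤ_[p])).1 hx
  refine ⟨y, y.2, ?_⟩
  have := congrArg (fun t : ℤ_[p] => (t : ℚ_[p])) hy
  simpa [vSL] using this

lemma Sset_diag {p : ℕ} [Fact p.Prime] (g : Matrix.SpecialLinearGroup (Fin 2) ℚ_[p])
    (h1 : g.1 1 0 = 0) (h2 : g.1 0 1 = 0) : Sset p g := by
  have hd := g.2
  rw [Matrix.det_fin_two, h1, h2, mul_zero, sub_zero] at hd
  have hp : (p : ℚ_[p]) ≠ 0 := by exact_mod_cast (Fact.out : p.Prime).ne_zero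
  have hp' : (p : ℝ) ≠ 0 := by exact_mod_cast (Fact.out : p.Prime).ne_zero
  have h0 : g.1 0 0 ≠ 0 := left_ne_zero_of_mul_eq_one hd
  obtain ⟨n, hn⟩ : ∃ n : ℤ, ‖g.1 0 0‖ = (p : ℝ) ^ (-n) :=
    ⟨_, Padic.norm_eq_zpow_neg_valuation h0⟩
  have hpn : (p : ℚ_[p]) ^ n ≠ 0 := zpow_ne_zero _ hp
  have hpn' : (p : ℝ) ^ n ≠ 0 := zpow_ne_zero _ hp'
  have hn1 : ‖g.1 1 1‖ = (p : ℝ) ^ n := by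
    have := congrArg norm hd
    rw [norm_mul, hn, norm_one, zpow_neg] at this
    field_simp at this
    exact this
  refine ⟨n, 1, ?_, (aSL p n)⁻¹ * g, ⟨?_, 0, by simp, ?_⟩, by group⟩
  · intro i j
    fin_cases i <;> fin_cases j <;> simp
  · intro i j
    rw [Matrix.SpecialLinearGroup.coe_mul, Matrix.SpecialLinearGroup.coe_inv,
      Matrix.adjugate_fin_two, Matrix.mul_apply, Fin.sum_univ_two]
    fin_cases i <;> fin_cases j <;> simp [aSL, h1, h2, hn, hn1, hpn']
  · rw [Matrix.SpecialLinearGroup.coe_mul, Matrix.SpecialLinearGroup.coe_inv,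
      Matrix.adjugate_fin_two, Matrix.mul_apply, Fin.sum_univ_two]
    simp [aSL, h1]

lemma Sset_up1 {p : ℕ} [Fact p.Prime] (g : Matrix.SpecialLinearGroup (Fin 2) ℚ_[p])
    (h1 : g.1 1 0 = 0) (h2 : ‖g.1 0 1‖ ≤ ‖g.1 1 1‖) : Sset p g := by
  have hd := g.2
  rw [Matrix.det_fin_two, h1, mul_zero, sub_zero] at hd
  have h0 : g.1 1 1 ≠ 0 := right_ne_zero_of_mul_eq_one hd
  apply Sset_left (k := uSL p (-(g.1 0 1 / g.1 1 1)))
  · apply uSL_K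
    rw [norm_neg, norm_div]
    exact div_le_one_of_le₀ h2 (norm_nonneg _)
  · apply Sset_diag <;>
    rw [Matrix.SpecialLinearGroup.coe_mul, Matrix.mul_apply, Fin.sum_univ_two] <;>
    simp [uSL, h1, h0]

lemma Sset_up {p : ℕ} [Fact p.Prime] (g : Matrix.SpecialLinearGroup (Fin 2) ℚ_[p])
    (h1 : g.1 1 0 = 0) : Sset p g := by
  have hd := g.2
  rw [Matrix.det_fin_two, h1, mul_zero, sub_zero] at hd
  have h0 : g.1 0 0 ≠ 0 := left_ne_zero_of_mul_eq_one hd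
  rcases le_or_gt ‖g.1 0 1‖ ‖g.1 1 1‖ with h2 | h2
  · exact Sset_up1 g h1 h2
  rcases le_or_gt ‖g.1 0 1‖ ‖g.1 0 0‖ with h3 | h3
  · apply Sset_right (i := uSL p (-(g.1 0 1 / g.1 0 0)))
    · apply uSL_I
      rw [norm_neg, norm_div]
      exact div_le_one_of_le₀ h3 (norm_nonneg _)
    · apply Sset_diag <;>
      rw [Matrix.SpecialLinearGroup.coe_mul, Matrix.mul_apply, Fin.sum_univ_two] <;>
      simp [uSL, h1]
      field_simp
      simp
  · have hx : g.1 0 1 ≠ 0 := norm_pos_iff.1 ((norm_nonneg _).trans_lt h3)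
    apply Sset_right (i := vSL p (-(g.1 0 0 / g.1 0 1)))
    · apply vSL_I
      rw [norm_neg, norm_div]
      exact (div_lt_one (norm_pos_iff.2 hx)).2 h3
    · apply Sset_left (k := wSL p) wSL_K
      apply Sset_up1
      · simp only [Matrix.SpecialLinearGroup.coe_mul, Matrix.mul_apply, Fin.sum_univ_two]
        simp [wSL, vSL]
        field_simp
        simp
      · simp only [Matrix.SpecialLinearGroup.coe_mul, Matrix.mul_apply, Fin.sum_univ_two]
        simp [wSL, vSL]
        exact h2.le

lemma Sset_all1 {p : ℕ} [Fact p.Prime] (g : Matrix.SpecialLinearGroup (Fin 2) ℚ_[p])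
    (h : ‖g.1 1 0‖ ≤ ‖g.1 0 0‖) : Sset p g := by
  by_cases h0 : g.1 0 0 = 0
  · apply Sset_up
    rw [h0, norm_zero] at h
    exact norm_le_zero_iff.1 h
  · apply Sset_left (k := vSL p (-(g.1 1 0 / g.1 0 0)))
    · apply vSL_K
      rw [norm_neg, norm_div]
      exact div_le_one_of_le₀ h (norm_nonneg _)
    · apply Sset_up
      simp only [Matrix.SpecialLinearGroup.coe_mul, Matrix.mul_apply, Fin.sum_univ_two]
      simp [vSL, h0]

lemma Sset_all {p : ℕ} [Fact p.Prime] (g : Matrix.SpecialLinearGroup (Fin 2) ℚ_[p]) :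
    Sset p g := by
  rcases le_total ‖g.1 1 0‖ ‖g.1 0 0‖ with h | h
  · exact Sset_all1 g h
  · apply Sset_left (k := wSL p) wSL_K
    apply Sset_all1
    simp only [Matrix.SpecialLinearGroup.coe_mul, Matrix.mul_apply, Fin.sum_univ_two]
    simpa [wSL] using h

lemma K_a_I_unique {p : ℕ} [Fact p.Prime] {k i : Matrix.SpecialLinearGroup (Fin 2) ℚ_[p]}
    (hk : k ∈ Kset p) (hi : i ∈ Iset p) {l m : ℤ} (e : aSL p m * i = k * aSL p l) : m = l := by
  have hp1 : (1 : ℝ) < p := by exact_mod_cast (Fact.out : p.Prime).one_lt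
  obtain ⟨d0, d1⟩ := Iset_diag hi
  have e0 := congrArg (fun t => ‖t.1 0 0‖) e
  have e1 := congrArg (fun t => ‖t.1 1 1‖) e
  simp only [Matrix.SpecialLinearGroup.coe_mul, Matrix.mul_apply, Fin.sum_univ_two] at e0 e1
  simp [aSL, -zpow_neg] at e0 e1
  have k0 := hk 0 0
  have k1 := hk 1 1
  rw [d0] at e0
  rw [d1] at e1
  have q : ∀ n : ℤ, (0 : ℝ) < (p : ℝ) ^ n := fun n => zpow_pos (by linarith) _
  apply le_antisymm
  · have : (p : ℝ) ^ m ≤ (p : ℝ) ^ l := by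
      have := q l
      simp at e1
      nlinarith
    exact (zpow_le_zpow_iff_right₀ hp1).1 this
  · have : (p : ℝ) ^ (-m) ≤ (p : ℝ) ^ (-l) := by
      have := q (-l)
      rw [zpow_neg] at this ⊢
      rw [zpow_neg]
      simp at e0
      nlinarith
    have := (zpow_le_zpow_iff_right₀ hp1).1 this
    linarith

/-- Decomposition `G = K·Ã·I`:  every `g ∈ SL(2,ℚ_p)` can be written as `g = k·a_λ·i` with
`k ∈ K`, `i ∈ I` and `λ ∈ ℤ`, and the integer `λ` with this property is unique. -/
theorem stmt8 (p : ℕ) [Fact p.Prime] (g : Matrix.SpecialLinearGroup (Fin 2) ℚ_[p]) :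
    ∃! lam : ℤ, ∃ k ∈ Kset p, ∃ i ∈ Iset p, g = k * aSL p lam * i := by
  obtain ⟨l, k, hk, i, hi, e⟩ := Sset_all g
  refine ⟨l, ⟨k, hk, i, hi, e⟩, ?_⟩
  rintro m ⟨k', hk', i', hi', e'⟩
  refine K_a_I_unique (Kset_mul (Kset_inv hk') hk) (Iset_mul hi' (Iset_inv hi)) ?_
  have : k'⁻¹ * (k' * aSL p m * i') * i⁻¹ = k'⁻¹ * (k * aSL p l * i) * i⁻¹ := by rw [← e, ← e']
  simpa [mul_assoc] using this
end

section
/- Let F be a finite field of odd cardinality q, let χ be the quadratic character of F, let ψ : F → ℂ be a nontrivial additive character, let ε ∈ F be a nonsquare and v ∈ F nonzero. For c ∈ F nonzero and s ∈ {1, −1} let S(c, s) = {(x, y) ∈ F² : x·y = c and χ(x) = s}. Consider the alternating combination T'(f) = Σ_{S(v²,χ(v))} f − Σ_{S(v²,χ(εv))} f − Σ_{S(εv²,χ(v))} f + Σ_{S(εv²,χ(εv))} f, where each sum is of f(x, y) over the indicated set. Then: (i) for every b ∈ F, T'((x,y) ↦ ψ(x·b)) = 0; and (ii) for every a ∈ F,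 T'((x,y) ↦ ψ(y·a)) = 2·χ(v)·χ(a)·Σ_{t ∈ F} χ(t)·ψ(t). (This is equation (eqn:hatvarphi01) of the paper for the function φ₍₁₎, in raw exponential-sum form.) -/
open Finset

/-- The alternating combination `T'(f) = Σ_{S(v²,χ(v))} f − Σ_{S(v²,χ(εv))} f
− Σ_{S(εv²,χ(v))} f + Σ_{S(εv²,χ(εv))} f`, where
`S(c,s) = {(x,y) ∈ F² : x·y = c ∧ χ(x) = s}`. -/
noncomputable def Tsum1 {F : Type*} [Field F] [Fintype F] [DecidableEq F]
    (χ : F → ℤ) (ε v : F) (f : F → F → ℂ) : ℂ :=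
    (∑ t ∈ univ.filter (fun t : F × F => t.1 * t.2 = v ^ 2 ∧ χ t.1 = χ v), f t.1 t.2)
  - (∑ t ∈ univ.filter (fun t : F × F => t.1 * t.2 = v ^ 2 ∧ χ t.1 = χ (ε * v)), f t.1 t.2)
  - (∑ t ∈ univ.filter (fun t : F × F => t.1 * t.2 = ε * v ^ 2 ∧ χ t.1 = χ v), f t.1 t.2)
  + (∑ t ∈ univ.filter (fun t : F × F => t.1 * t.2 = ε * v ^ 2 ∧ χ t.1 = χ (ε * v)), f t.1 t.2)


lemma aux_fiber {F : Type*} [Field F] [Fintype F] [DecidableEq F]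
    (χ : F → ℤ) (hχ0 : χ 0 = 0) (c : F) (s : ℤ) (hs : s ≠ 0) (f : F → F → ℂ) :
    (∑ t ∈ univ.filter (fun t : F × F => t.1 * t.2 = c ∧ χ t.1 = s), f t.1 t.2)
      = ∑ x : F, if χ x = s then f x (c / x) else 0 := by
  rw [Finset.sum_filter, Fintype.sum_prod_type]
  refine Finset.sum_congr rfl fun x _ => ?_
  by_cases hx : x = 0
  · subst hx
    simp [hχ0, hs.symm]
  · have h : ∀ y : F, x * y = c ↔ y = c / x := fun y => by
      rw [eq_div_iff hx, mul_comm]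
    by_cases h2 : χ x = s <;> simp [h, h2]

lemma aux_diff {F : Type*} [Field F] [Fintype F] [DecidableEq F]
    (c : F) (s : ℤ) (hs : s = 1 ∨ s = -1) (f : F → F → ℂ) :
    (∑ t ∈ univ.filter (fun t : F × F => t.1 * t.2 = c ∧ quadraticChar F t.1 = s), f t.1 t.2)
    - (∑ t ∈ univ.filter (fun t : F × F => t.1 * t.2 = c ∧ quadraticChar F t.1 = -s), f t.1 t.2)
      = (s : ℂ) * ∑ x : F, (quadraticChar F x : ℂ) * f x (c / x) := by
  have hs0 : s ≠ 0 := by rcases hs with h | h <;> simp [h]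
  rw [aux_fiber (fun x => quadraticChar F x) (by simp) c s hs0,
    aux_fiber (fun x => quadraticChar F x) (by simp) c (-s) (by simpa using hs0),
    ← Finset.sum_sub_distrib, Finset.mul_sum]
  refine Finset.sum_congr rfl fun x _ => ?_
  by_cases hx : x = 0
  · subst hx
    simp [hs0, hs0.symm]
  · rcases quadraticChar_dichotomy hx with h | h <;> rcases hs with rfl | rfl <;>
      norm_num [h]

lemma aux_gauss {F : Type*} [Field F] [Fintype F] [DecidableEq F]
    (d : F) (hd : d ≠ 0) (ψ : F → ℂ) :
    ∑ x : F, (quadraticChar F x : ℂ) * ψ (d / x)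
      = (quadraticChar F d : ℂ) * ∑ t : F, (quadraticChar F t : ℂ) * ψ t := by
  rw [Finset.mul_sum]
  refine Finset.sum_bij' (fun x _ => d / x) (fun x _ => d / x) (by simp) (by simp)
    (fun x _ => by simp [div_div_cancel₀, hd]) (fun x _ => by simp [div_div_cancel₀, hd]) ?_
  intro x _
  by_cases hx : x = 0
  · subst hx; simp
  · have h1 : quadraticChar F x = quadraticChar F d * quadraticChar F (d / x) := by
      have : d * (d / x) = x * (d / x) ^ 2 := by field_simp
      rw [← map_mul, this, map_mul, quadraticChar_sq_one' (div_ne_zero hd hx), mul_one]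
    rw [h1]; push_cast; ring

/-- Equation (eqn:hatvarphi01) of the paper for `φ₍₁₎`, in raw exponential-sum form:
(i) `T'((x,y) ↦ ψ(x·b)) = 0` for all `b`, and
(ii) `T'((x,y) ↦ ψ(y·a)) = 2·χ(v)·χ(a)·Σ_t χ(t)·ψ(t)` for all `a`. -/
theorem stmt14 (F : Type*) [Field F] [Fintype F] [DecidableEq F]
    (hq : Odd (Fintype.card F))
    (χ : F → ℤ) (hχ0 : χ 0 = 0)
    (hχ1 : ∀ x : F, x ≠ 0 → IsSquare x → χ x = 1)
    (hχ2 : ∀ x : F, ¬ IsSquare x → χ x = -1)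
    (ψ : F → ℂ) (hψadd : ∀ x y : F, ψ (x + y) = ψ x * ψ y) (hψ : ∃ x : F, ψ x ≠ 1)
    (ε : F) (hε0 : ε ≠ 0) (hε : ¬ IsSquare ε) (v : F) (hv : v ≠ 0) :
    (∀ b : F, Tsum1 χ ε v (fun x _ => ψ (x * b)) = 0) ∧
    (∀ a : F, Tsum1 χ ε v (fun _ y => ψ (y * a)) =
      2 * (χ v : ℂ) * (χ a : ℂ) * ∑ t : F, (χ t : ℂ) * ψ t) := by
  have hodd : ringChar F ≠ 2 := by
    intro h
    have := FiniteField.even_card_of_char_two h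
    rcases hq with ⟨k, hk⟩
    omega
  obtain rfl : χ = fun x => quadraticChar F x := by
    funext x
    by_cases hx : x = 0
    · subst hx; simp [hχ0]
    · by_cases h : IsSquare x
      · rw [hχ1 x hx h, (quadraticChar_one_iff_isSquare hx).2 h]
      · rw [hχ2 x h, quadraticChar_neg_one_iff_not_isSquare.2 h]
  have he : quadraticChar F ε = -1 := quadraticChar_neg_one_iff_not_isSquare.2 hε
  have hev : quadraticChar F (ε * v) = - quadraticChar F v := by rw [map_mul, he]; ring
  have key : ∀ f : F → F → ℂ, Tsum1 (fun x => quadraticChar F x) ε v f =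
      (quadraticChar F v : ℂ) * (∑ x : F, (quadraticChar F x : ℂ) * f x (v ^ 2 / x)
        - ∑ x : F, (quadraticChar F x : ℂ) * f x (ε * v ^ 2 / x)) := by
    intro f
    have h1 := aux_diff (v ^ 2) _ (quadraticChar_dichotomy hv) f
    have h2 := aux_diff (ε * v ^ 2) _ (quadraticChar_dichotomy hv) f
    unfold Tsum1
    simp only [hev]
    rw [mul_sub, ← h1, ← h2]
    ring
  refine ⟨fun b => by rw [key]; simp, fun a => ?_⟩
  rw [key]
  by_cases ha : a = 0
  · subst ha; simp
  · have hv2 : v ^ 2 ≠ 0 := pow_ne_zero 2 hv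
    have h1 := aux_gauss (v ^ 2 * a) (mul_ne_zero hv2 ha) ψ
    have h2 := aux_gauss (ε * v ^ 2 * a) (mul_ne_zero (mul_ne_zero hε0 hv2) ha) ψ
    simp only [div_mul_eq_mul_div, h1, h2]
    simp only [map_mul, he, quadraticChar_sq_one' hv]
    push_cast
    ring
end
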